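/- Let μ be a Young diagram with exactly n cells. For every f ∈ R_n with f ∉ K_μ, there exists g ∈ R_n such that f·g − Δ_μ ∈ K_μ. Consequently every nonzero ideal of the quotient algebra A_μ = R_n/K_μ contains the image of Δ_μ, so A_μ has a unique minimal nonzero ideal, namely the line spanned by the image of Δ_μ. -/

import Mathlib

/-!
Write `Δ` for `Δ_μ`. Differential operators compose as `(f * g)(∂) = g(∂) ∘ f(∂)`
(`diffOp_mul`). If `P = f(∂)Δ` is nonzero, pick a monomial `Z^m` of maximal total degree in `P`:
applying `Z^m(∂)` to `P` kills every other monomial and leaves a nonzero constant, so every constant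
is of the form `g(∂)P` (`exists_diffOp_eq_C`). Since `Δ` is homogeneous, `Δ(∂)Δ` is a constant
(`diffOp_self_of_isHomogeneous`). Choosing `g` with `g(∂)P = Δ(∂)Δ` gives `(f * g - Δ)(∂)Δ = 0`.
The statement on ideals is a formal consequence: `Δ = f * g - (f * g - Δ)`.
-/

open MvPolynomial

/-- `Δ_μ` for an enumeration `T : Fin n → ℕ × ℕ` of the cells of a Young diagram:
`Δ = det [X_s ^ c_t * Y_s ^ r_t]`, where `T t = (r_t, c_t)`, the `X`-variables are
indexed by `Sum.inl` and the `Y`-variables by `Sum.inr`. -/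
noncomputable def Delta (n : ℕ) (T : Fin n → ℕ × ℕ) :
    MvPolynomial (Fin n ⊕ Fin n) ℂ :=
  Matrix.det (Matrix.of fun s t : Fin n =>
    (X (Sum.inl s) : MvPolynomial (Fin n ⊕ Fin n) ℂ) ^ (T t).2 * X (Sum.inr s) ^ (T t).1)

/-- `diffOp f P = f(∂)P`: the result of applying to `P` the constant-coefficient
differential operator obtained from `f` by substituting `∂/∂Z_i` for each variable `Z_i`. -/
noncomputable def diffOp {ι : Type*} [Fintype ι] [DecidableEq ι]
    (f P : MvPolynomial ι ℂ) : MvPolynomial ι ℂ :=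
  ∑ m ∈ f.support, ∑ m' ∈ P.support,
    MvPolynomial.monomial (m' - m)
      (f.coeff m * P.coeff m' * ∏ i, ((m' i).descFactorial (m i) : ℂ))

section DiffOp

variable {ι : Type*} [Fintype ι] [DecidableEq ι]

/-- The coefficients of `f(∂)P`. The truncated exponents `m' - m` in `diffOp` do no harm: the
falling factorials vanish unless `m ≤ m'`. -/
lemma coeff_diffOp (f P : MvPolynomial ι ℂ) (k : ι →₀ ℕ) :
    (diffOp f P).coeff k = ∑ m ∈ f.support,
      f.coeff m * (P.coeff (k + m) * ∏ i, (((k + m) i).descFactorial (m i) : ℂ)) := by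
  classical
  unfold diffOp
  rw [coeff_sum]
  refine Finset.sum_congr rfl fun m _ => ?_
  rw [coeff_sum, Finset.sum_eq_single (k + m)]
  · rw [add_tsub_cancel_right, coeff_monomial, if_pos rfl, mul_assoc]
  · intro m' _ hne
    rw [coeff_monomial]
    split_ifs with h
    · obtain ⟨i, hi⟩ : ∃ i, m' i < m i := by
        by_contra! hle
        exact hne (by rw [← h, tsub_add_cancel_of_le (show m ≤ m' from hle)])
      rw [Finset.prod_eq_zero (Finset.mem_univ i), mul_zero]
      rw [Nat.descFactorial_of_lt hi, Nat.cast_zero]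
    · rfl
  · intro h
    rw [notMem_support_iff.mp h]
    simp

lemma coeff_diffOp_of_subset (f P : MvPolynomial ι ℂ) (k : ι →₀ ℕ) {S : Finset (ι →₀ ℕ)}
    (hS : f.support ⊆ S) :
    (diffOp f P).coeff k = ∑ m ∈ S,
      f.coeff m * (P.coeff (k + m) * ∏ i, (((k + m) i).descFactorial (m i) : ℂ)) := by
  rw [coeff_diffOp]
  refine Finset.sum_subset hS fun m _ hm => ?_
  rw [notMem_support_iff.mp hm, zero_mul]

lemma coeff_diffOp_monomial (a : ι →₀ ℕ) (c : ℂ) (P : MvPolynomial ι ℂ) (k : ι →₀ ℕ) :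
    (diffOp (monomial a c) P).coeff k =
      c * (P.coeff (k + a) * ∏ i, (((k + a) i).descFactorial (a i) : ℂ)) := by
  rw [coeff_diffOp_of_subset _ _ _ support_monomial_subset, Finset.sum_singleton, coeff_monomial,
    if_pos rfl]

lemma diffOp_add_left (f g P : MvPolynomial ι ℂ) :
    diffOp (f + g) P = diffOp f P + diffOp g P := by
  classical
  ext k
  rw [coeff_add, coeff_diffOp_of_subset (f + g) P k support_add,
    coeff_diffOp_of_subset f P k Finset.subset_union_left,
    coeff_diffOp_of_subset g P k Finset.subset_union_right, ← Finset.sum_add_distrib]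
  exact Finset.sum_congr rfl fun m _ => by rw [coeff_add, add_mul]

lemma diffOp_add_right (f P Q : MvPolynomial ι ℂ) :
    diffOp f (P + Q) = diffOp f P + diffOp f Q := by
  ext k
  rw [coeff_add, coeff_diffOp, coeff_diffOp, coeff_diffOp, ← Finset.sum_add_distrib]
  exact Finset.sum_congr rfl fun m _ => by rw [coeff_add]; ring

lemma diffOp_sub_left (f g P : MvPolynomial ι ℂ) :
    diffOp (f - g) P = diffOp f P - diffOp g P := by
  rw [eq_sub_iff_add_eq, ← diffOp_add_left, sub_add_cancel]

/-- Multiplication of symbols is composition of operators. -/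
lemma diffOp_mul (f g P : MvPolynomial ι ℂ) :
    diffOp (f * g) P = diffOp g (diffOp f P) := by
  induction f using MvPolynomial.induction_on' with
  | add p q hp hq => rw [add_mul, diffOp_add_left, hp, hq, diffOp_add_left, diffOp_add_right]
  | monomial a c =>
    induction g using MvPolynomial.induction_on' with
    | add p q hp hq => rw [mul_add, diffOp_add_left, hp, hq, diffOp_add_left]
    | monomial b d =>
      ext k
      have hprod : (∏ i, (((k + (a + b)) i).descFactorial ((a + b) i) : ℂ)) =
          (∏ i, (((k + b + a) i).descFactorial (a i) : ℂ)) *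
            ∏ i, (((k + b) i).descFactorial (b i) : ℂ) := by
        rw [← Finset.prod_mul_distrib]
        refine Finset.prod_congr rfl fun i _ => ?_
        have h := Nat.descFactorial_mul_descFactorial (n := k i + b i + a i)
          (Nat.le_add_right (a i) (b i))
        rw [Nat.add_sub_cancel, Nat.add_sub_cancel_left] at h
        simp only [Finsupp.add_apply]
        rw [← Nat.cast_mul, mul_comm, h, add_comm (a i), add_assoc]
      rw [monomial_mul, coeff_diffOp_monomial, coeff_diffOp_monomial, coeff_diffOp_monomial, hprod,
        add_comm a b, ← add_assoc]
      ring

/-- A nonzero polynomial can be differentiated to any prescribed constant, by a scalar multiple of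
the operator attached to one of its monomials of maximal degree. -/
lemma exists_diffOp_eq_C {P : MvPolynomial ι ℂ} (hP : P ≠ 0) (c : ℂ) :
    ∃ g : MvPolynomial ι ℂ, diffOp g P = C c := by
  classical
  obtain ⟨m, hm, hmax⟩ := Finset.exists_max_image P.support Finsupp.degree
    (support_nonempty.mpr hP)
  have hw : P.coeff m * ∏ i, ((m i).descFactorial (m i) : ℂ) ≠ 0 := by
    refine mul_ne_zero (mem_support_iff.mp hm) (Finset.prod_ne_zero_iff.mpr fun i _ => ?_)
    rw [Nat.descFactorial_self]
    exact Nat.cast_ne_zero.mpr (Nat.factorial_ne_zero _)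
  refine ⟨monomial m (c / (P.coeff m * ∏ i, ((m i).descFactorial (m i) : ℂ))), ?_⟩
  ext k
  rw [coeff_diffOp_monomial, coeff_C]
  split_ifs with hk
  · rw [← hk, zero_add, div_mul_cancel₀ _ hw]
  · have h0 : P.coeff (k + m) = 0 := by
      by_contra hne
      have hle := hmax (k + m) (mem_support_iff.mpr hne)
      rw [map_add] at hle
      exact hk ((Finsupp.degree_eq_zero_iff k).mp (by omega)).symm
    rw [h0, zero_mul, mul_zero]

lemma diffOp_self_of_isHomogeneous {P : MvPolynomial ι ℂ} {d : ℕ} (hP : P.IsHomogeneous d) :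
    ∃ c : ℂ, diffOp P P = C c := by
  classical
  refine ⟨(diffOp P P).coeff 0, ?_⟩
  ext k
  rw [coeff_C]
  split_ifs with hk
  · rw [hk]
  · rw [coeff_diffOp]
    refine Finset.sum_eq_zero fun m hm => ?_
    have hmd : m.degree = d := by
      by_contra hne
      exact mem_support_iff.mp hm (hP.coeff_eq_zero hne)
    rw [hP.coeff_eq_zero (d := k + m), zero_mul, mul_zero]
    rw [map_add, hmd]
    intro h
    exact hk ((Finsupp.degree_eq_zero_iff k).mp (by omega)).symm

end DiffOp

/-- Each term of the determinant uses every column exactly once, so it has degree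
`∑ t, (c_t + r_t)`. -/
lemma isHomogeneous_Delta (n : ℕ) (T : Fin n → ℕ × ℕ) :
    (Delta n T).IsHomogeneous (∑ t, ((T t).2 + (T t).1)) := by
  unfold Delta
  rw [Matrix.det_apply]
  refine IsHomogeneous.sum _ _ _ fun σ _ => ?_
  have h : (∏ t, Matrix.of (fun s t : Fin n =>
      (X (Sum.inl s) : MvPolynomial (Fin n ⊕ Fin n) ℂ) ^ (T t).2 * X (Sum.inr s) ^ (T t).1)
        (σ t) t).IsHomogeneous (∑ t, ((T t).2 + (T t).1)) := by
    refine IsHomogeneous.prod _ _ _ fun t _ => ?_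
    exact (isHomogeneous_X_pow _ _).mul (isHomogeneous_X_pow _ _)
  rcases Int.units_eq_one_or (Equiv.Perm.sign σ) with hs | hs
  · rw [hs, one_smul]
    exact h
  · rw [hs, Units.neg_smul, one_smul]
    exact h.neg

/-- For every `f ∉ K_μ` there is `g` with `f·g ≡ Δ_μ mod K_μ`.  Consequently (second
conjunct, with ideals of `A_μ = R_n/K_μ` expressed as ideals `J` of `R_n` containing
`K_μ`): every nonzero ideal of `A_μ` contains the image of `Δ_μ`, so `A_μ` has a unique
minimal nonzero ideal, the line spanned by the image of `Δ_μ`. -/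
theorem stmt10 (n : ℕ) (hn : 1 ≤ n) (μ : YoungDiagram) (hμ : μ.cells.card = n)
    (T : Fin n ≃ {x // x ∈ μ.cells}) :
    (∀ f : MvPolynomial (Fin n ⊕ Fin n) ℂ,
        diffOp f (Delta n (fun t => (T t).val)) ≠ 0 →
        ∃ g : MvPolynomial (Fin n ⊕ Fin n) ℂ,
          diffOp (f * g - Delta n (fun t => (T t).val))
            (Delta n (fun t => (T t).val)) = 0) ∧
    (∀ J : Ideal (MvPolynomial (Fin n ⊕ Fin n) ℂ),
        (∀ f, diffOp f (Delta n (fun t => (T t).val)) = 0 → f ∈ J) →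
        (∃ f ∈ J, diffOp f (Delta n (fun t => (T t).val)) ≠ 0) →
        Delta n (fun t => (T t).val) ∈ J) := by
  have key : ∀ f : MvPolynomial (Fin n ⊕ Fin n) ℂ,
      diffOp f (Delta n (fun t => (T t).val)) ≠ 0 →
      ∃ g : MvPolynomial (Fin n ⊕ Fin n) ℂ,
        diffOp (f * g - Delta n (fun t => (T t).val)) (Delta n (fun t => (T t).val)) = 0 := by
    intro f hf
    obtain ⟨c, hc⟩ := diffOp_self_of_isHomogeneous (isHomogeneous_Delta n fun t => (T t).val)
    obtain ⟨g, hg⟩ := exists_diffOp_eq_C hf c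
    exact ⟨g, by rw [diffOp_sub_left, diffOp_mul, hg, hc, sub_self]⟩
  refine ⟨key, ?_⟩
  rintro J hJ ⟨f, hfJ, hf⟩
  obtain ⟨g, hg⟩ := key f hf
  have h := J.sub_mem (J.mul_mem_right g hfJ) (hJ _ hg)
  rwa [sub_sub_cancel] at h
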